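/- arXiv:2510.10698 — 2 statements merged into one kernel-verified Lean document; each statement's English description precedes it below -/
import Mathlib

section
/- Consider an instance of the asymmetric chore division problem whose entitlements satisfy w_1 ≤ w_2 ≤ … ≤ w_n, and let i be an agent with WMMS_i = w_i. Let p ∈ {1,…,n}, and let S be any set of chores such that every chore b ∈ S has V_i({b}) > w_p. Then V_i(S) ≤ ∑_{j>p} w_j. -/
open Finset

/-- Cost of a bundle `S` of chores to agent `i`, given per-chore costs `V`. -/
noncomputable def costOf {n m : ℕ} (V : Fin n → Fin m → ℝ) (i : Fin n)
    (S : Finset (Fin m)) : ℝ :=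
  ∑ b ∈ S, V i b

/-- `A` is an `n`-partition of the chores: pairwise disjoint bundles whose union
is the set of all chores. -/
def IsPartition {n m : ℕ} (A : Fin n → Finset (Fin m)) : Prop :=
  (∀ j k, j ≠ k → Disjoint (A j) (A k)) ∧ Finset.univ.biUnion A = Finset.univ

/-- Weighted maximin share of agent `i` under entitlements `w`. -/
noncomputable def WMMS {n m : ℕ} (V : Fin n → Fin m → ℝ) (w : Fin n → ℝ)
    (i : Fin n) : ℝ :=
  sInf { x | ∃ A : Fin n → Finset (Fin m), IsPartition A ∧
    x = ⨆ j, costOf V i (A j) * (w i / w j) }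

/-- Unweighted maximin share of agent `i`. -/
noncomputable def MMS {n m : ℕ} (V : Fin n → Fin m → ℝ) (i : Fin n) : ℝ :=
  sInf { x | ∃ A : Fin n → Finset (Fin m), IsPartition A ∧
    x = ⨆ j, costOf V i (A j) }

/-!
An optimal partition for agent `i` exists, as there are finitely many, and the normalization
`WMMSᵢ = wᵢ` says that its `j`-th bundle costs `i` at most `wⱼ`. A chore costing more than `t`
therefore lies in a bundle with `wⱼ > t`, and those bundles together cost at most the sum of
their entitlements.
-/

theorem sum_le_sum_filter_lt_of_subset_biUnion {ι α M : Type*} [DecidableEq α]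
    [AddCommMonoid M] [PartialOrder M] [IsOrderedAddMonoid M] [DecidableLT M]
    {I : Finset ι} {A : ι → Finset α} {S : Finset α} {f : α → M} {w : ι → M} {t : M}
    (hA : (I : Set ι).PairwiseDisjoint A) (hSA : S ⊆ I.biUnion A) (hf : ∀ b, 0 ≤ f b)
    (hAw : ∀ j ∈ I, ∑ b ∈ A j, f b ≤ w j) (hS : ∀ b ∈ S, t < f b) :
    ∑ b ∈ S, f b ≤ ∑ j ∈ I with t < w j, w j := by
  have hsub : S ⊆ {j ∈ I | t < w j}.biUnion A := by
    intro b hb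
    obtain ⟨j, hj, hbj⟩ := mem_biUnion.1 (hSA hb)
    have htw : t < w j := calc
      t < f b := hS b hb
      _ ≤ ∑ c ∈ A j, f c := single_le_sum (fun c _ ↦ hf c) hbj
      _ ≤ w j := hAw j hj
    exact mem_biUnion.2 ⟨j, mem_filter.2 ⟨hj, htw⟩, hbj⟩
  calc ∑ b ∈ S, f b
      ≤ ∑ b ∈ {j ∈ I | t < w j}.biUnion A, f b :=
        sum_le_sum_of_subset_of_nonneg hsub fun b _ _ ↦ hf b
    _ = ∑ j ∈ I with t < w j, ∑ b ∈ A j, f b :=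
        sum_biUnion (hA.subset (coe_subset.2 (filter_subset _ I)))
    _ ≤ ∑ j ∈ I with t < w j, w j := sum_le_sum fun j hj ↦ hAw j (mem_filter.1 hj).1

section WeightedMaximinShare

variable {n m : ℕ}

theorem isPartition_fibers (g : Fin m → Fin n) :
    IsPartition fun j ↦ ({b | g b = j} : Finset (Fin m)) := by
  refine ⟨fun j k hjk ↦ ?_, ?_⟩
  · exact disjoint_filter.2 fun b _ hj hk ↦ hjk (hj.symm.trans hk)
  · ext b
    simp

theorem exists_isPartition_WMMS_eq (V : Fin n → Fin m → ℝ) (w : Fin n → ℝ) (i : Fin n) :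
    ∃ A : Fin n → Finset (Fin m), IsPartition A ∧
      WMMS V w i = ⨆ j, costOf V i (A j) * (w i / w j) := by
  let share (A : Fin n → Finset (Fin m)) : ℝ := ⨆ j, costOf V i (A j) * (w i / w j)
  have hfinite : {x | ∃ A, IsPartition A ∧ x = share A}.Finite :=
    (Set.finite_range share).subset fun _ ⟨A, _, hx⟩ ↦ ⟨A, hx.symm⟩
  have hnonempty : {x | ∃ A, IsPartition A ∧ x = share A}.Nonempty :=
    ⟨_, _, isPartition_fibers fun _ ↦ i, rfl⟩
  exact hnonempty.csInf_mem hfinite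

theorem exists_isPartition_forall_costOf_le {V : Fin n → Fin m → ℝ} {w : Fin n → ℝ} {i : Fin n}
    (hw : ∀ j, 0 < w j) (hi : WMMS V w i ≤ w i) :
    ∃ A : Fin n → Finset (Fin m), IsPartition A ∧ ∀ j, costOf V i (A j) ≤ w j := by
  obtain ⟨A, hA, hWMMS⟩ := exists_isPartition_WMMS_eq V w i
  refine ⟨A, hA, fun j ↦ ?_⟩
  have hscaled : costOf V i (A j) * (w i / w j) ≤ w j * (w i / w j) := calc
    costOf V i (A j) * (w i / w j) ≤ ⨆ k, costOf V i (A k) * (w i / w k) :=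
      le_ciSup (f := fun k ↦ costOf V i (A k) * (w i / w k)) (Set.finite_range _).bddAbove j
    _ = WMMS V w i := hWMMS.symm
    _ ≤ w i := hi
    _ = w j * (w i / w j) := (mul_div_cancel₀ _ (hw j).ne').symm
  exact le_of_mul_le_mul_right hscaled (div_pos (hw i) (hw j))

theorem cost_expensive_chores_le_general {V : Fin n → Fin m → ℝ} {w : Fin n → ℝ} {i : Fin n}
    (hV : ∀ b, 0 ≤ V i b) (hw : ∀ j, 0 < w j) (hi : WMMS V w i ≤ w i)
    {t : ℝ} {S : Finset (Fin m)} (hS : ∀ b ∈ S, t < V i b) :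
    costOf V i S ≤ ∑ j with t < w j, w j := by
  obtain ⟨A, ⟨hdisjoint, hcover⟩, hcost⟩ := exists_isPartition_forall_costOf_le hw hi
  exact sum_le_sum_filter_lt_of_subset_biUnion (fun j _ k _ hjk ↦ hdisjoint j k hjk)
    (hcover ▸ subset_univ S) hV (fun j _ ↦ hcost j) hS

end WeightedMaximinShare

/-- with sorted entitlements and an agent `i` with `WMMSᵢ = wᵢ`, any
set `S` of chores each of which costs more than `w_p` to agent `i` has total cost
at most `∑_{j>p} wⱼ`. -/
theorem cost_expensive_chores_le (n m : ℕ) (V : Fin n → Fin m → ℝ)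
    (w : Fin n → ℝ) (hV : ∀ i b, 0 ≤ V i b) (hw : ∀ i, 0 < w i)
    (hw1 : ∀ i, w i ≤ 1) (hsum : ∑ i, w i = 1) (hwsorted : Monotone w)
    (i : Fin n) (hnorm : WMMS V w i = w i)
    (p : Fin n) (S : Finset (Fin m)) (hS : ∀ b ∈ S, w p < V i b) :
    costOf V i S ≤ ∑ j ∈ Finset.univ.filter (fun j => p < j), w j := by
  have hsub : ({j | w p < w j} : Finset (Fin n)) ⊆ ({j | p < j} : Finset (Fin n)) :=
    monotone_filter_right univ fun _ _ hj ↦ hwsorted.reflect_lt hj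
  exact (cost_expensive_chores_le_general (hV i) hw hnorm.le hS).trans
    (sum_le_sum_of_subset_of_nonneg hsub fun j _ _ ↦ (hw j).le)
end

section
/- Let w_1, w_2, …, w_n be the entitlements of n agents. Suppose the agents are partitioned into n' disjoint groups and, for each group i ∈ {1,…,n'}, let i* ∈ {1,…,n} be the index of a designated representative agent, where the representatives 1*, 2*, …, n'* are pairwise distinct (a representative need not belong to its group). Let α > 1 and assume ∑_{j ∈ group i} w_j ≤ α·w_{i*} for each group i. Set β = 1/(∑_{i=1}^{n'} w_{i*}) and let γ ≥ 1. If every instance of the chore division problem with n' agents and entitlements (β·w_{1*}, …, β·w_{n'*}) admits a γ-WMMS assignment, then every instance with n agents and entitlements (w_1, …, w_n) admits an (α·γ)-WMMS assignment. -/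
open Finset

/-!
The quotient `WMMS_i / w_i` is the least `x` for which the chores can be partitioned so that,
measured by agent `i`, every bundle `A_j` costs at most `x * w_j`. Merging the bundles of each group
of agents turns such a partition into one whose `k`-th bundle costs at most
`x * ∑ w_j ≤ α * x * w_{k*}`, so passing to the representatives increases the share of a
representative by a factor of at most `α`. An assignment for the representatives then serves all
agents, the others receiving no chores.
-/

/-- A `γ`-WMMS assignment: a partition of the chores in which agent `i`, who receives `S i`, bears a
cost of at most `γ` times her weighted maximin share. -/
def IsWMMSAssignment {n m : ℕ} (V : Fin n → Fin m → ℝ) (w : Fin n → ℝ) (γ : ℝ)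
    (S : Fin n → Finset (Fin m)) : Prop :=
  IsPartition S ∧ ∀ i, costOf V i (S i) ≤ γ * WMMS V w i

/-- The bundles obtained from `A` by handing `A j` over to `f j`. This merges the bundles of each
group when `f` sends agents to their groups, and extends an assignment by empty bundles when `f` is
injective. -/
def mergeBundles {n p m : ℕ} (f : Fin n → Fin p) (A : Fin n → Finset (Fin m)) (k : Fin p) :
    Finset (Fin m) :=
  Finset.biUnion {j | f j = k} A

section MergeBundles

variable {n p m : ℕ} {f : Fin n → Fin p} {A : Fin n → Finset (Fin m)}

protected theorem IsPartition.mergeBundles (hA : IsPartition A) (f : Fin n → Fin p) :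
    IsPartition (mergeBundles f A) := by
  refine ⟨fun k l hkl => ?_, eq_univ_of_forall fun b => ?_⟩
  · simp only [mergeBundles, disjoint_biUnion_left, disjoint_biUnion_right, mem_filter_univ]
    rintro j rfl i rfl
    exact hA.1 i j (ne_of_apply_ne f hkl)
  · obtain ⟨j, -, hbj⟩ := mem_biUnion.1 (hA.2 ▸ mem_univ b)
    exact mem_biUnion.2 ⟨f j, mem_univ _, mem_biUnion.2 ⟨j, by simp, hbj⟩⟩

theorem costOf_mergeBundles {q : ℕ} (hA : IsPartition A) (V : Fin q → Fin m → ℝ) (i : Fin q)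
    (f : Fin n → Fin p) (k : Fin p) :
    costOf V i (mergeBundles f A k) = ∑ j with f j = k, costOf V i (A j) :=
  sum_biUnion fun j _ l _ hjl => hA.1 j l hjl

theorem mergeBundles_apply_of_injective (hf : Function.Injective f) (j : Fin n) :
    mergeBundles f A (f j) = A j := by
  simp [mergeBundles, hf.eq_iff, filter_eq']

theorem mergeBundles_eq_empty {k : Fin p} (hk : k ∉ Set.range f) : mergeBundles f A k = ∅ := by
  have fiber_eq_empty : ({j | f j = k} : Finset (Fin n)) = ∅ :=
    filter_eq_empty_iff.2 fun j _ hj => hk ⟨j, hj⟩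
  rw [mergeBundles, fiber_eq_empty, biUnion_empty]

end MergeBundles

theorem exists_isPartition {n : ℕ} (i : Fin n) (m : ℕ) :
    ∃ A : Fin n → Finset (Fin m), IsPartition A := by
  have single_bundle : IsPartition fun _ : Fin 1 => (univ : Finset (Fin m)) :=
    ⟨fun j k hjk => absurd (Subsingleton.elim j k) hjk, by simp⟩
  exact ⟨_, single_bundle.mergeBundles fun _ => i⟩

section WMMS

variable {n m : ℕ} {V : Fin n → Fin m → ℝ} {w : Fin n → ℝ} {i : Fin n}

theorem costOf_nonneg (hV : ∀ b, 0 ≤ V i b) (S : Finset (Fin m)) : 0 ≤ costOf V i S :=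
  sum_nonneg fun b _ => hV b

theorem WMMS_nonneg (hw : ∀ j, 0 ≤ w j) (hV : ∀ b, 0 ≤ V i b) : 0 ≤ WMMS V w i := by
  refine Real.sInf_nonneg ?_
  rintro _ ⟨A, -, rfl⟩
  exact Real.iSup_nonneg fun j => mul_nonneg (costOf_nonneg hV _) (div_nonneg (hw i) (hw j))

theorem WMMS_le_iff {x : ℝ} :
    WMMS V w i ≤ x ↔
      ∃ A : Fin n → Finset (Fin m), IsPartition A ∧ ∀ j, costOf V i (A j) * (w i / w j) ≤ x := by
  have : Nonempty (Fin n) := ⟨i⟩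
  let values : Set ℝ := {x | ∃ A : Fin n → Finset (Fin m), IsPartition A ∧
    x = ⨆ j, costOf V i (A j) * (w i / w j)}
  have finite_values : values.Finite :=
    (Set.finite_range fun A : Fin n → Finset (Fin m) => ⨆ j, costOf V i (A j) * (w i / w j)).subset
      fun _ ⟨A, _, hx⟩ => ⟨A, hx.symm⟩
  constructor
  · intro hle
    obtain ⟨A₀, hA₀⟩ := exists_isPartition i m
    obtain ⟨A, hA, hWMMS⟩ : WMMS V w i ∈ values :=
      Set.Nonempty.csInf_mem ⟨_, A₀, hA₀, rfl⟩ finite_values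
    rw [hWMMS] at hle
    exact ⟨A, hA, (ciSup_le_iff (Set.finite_range _).bddAbove).1 hle⟩
  · rintro ⟨A, hA, hle⟩
    exact (csInf_le finite_values.bddBelow ⟨A, hA, rfl⟩).trans (ciSup_le hle)

theorem WMMS_le_mul_iff (hw : ∀ j, 0 < w j) {x : ℝ} :
    WMMS V w i ≤ x * w i ↔
      ∃ A : Fin n → Finset (Fin m), IsPartition A ∧ ∀ j, costOf V i (A j) ≤ x * w j := by
  have mul_div_le_iff (c : ℝ) (j : Fin n) : c * (w i / w j) ≤ x * w i ↔ c ≤ x * w j := by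
    rw [← mul_div_assoc, div_le_iff₀ (hw j), mul_right_comm, mul_le_mul_iff_left₀ (hw i)]
  simp only [WMMS_le_iff, mul_div_le_iff]

theorem WMMS_const_mul {c : ℝ} (hc : c ≠ 0) : WMMS V (fun j => c * w j) i = WMMS V w i := by
  simp only [WMMS, mul_div_mul_left _ _ hc]

theorem WMMS_normalize (hw : ∀ j, 0 < w j) :
    WMMS V (fun j => 1 / (∑ k, w k) * w j) i = WMMS V w i :=
  WMMS_const_mul (one_div_pos.2 (sum_pos (fun k _ => hw k) ⟨i, mem_univ i⟩)).ne'

end WMMS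

section GroupReduction

variable {n p m : ℕ} {V : Fin n → Fin m → ℝ} {w : Fin n → ℝ} {g : Fin n → Fin p}
  {rep : Fin p → Fin n} {α : ℝ}

theorem WMMS_rep_le_mul (hw : ∀ j, 0 < w j) (hgroup : ∀ k, ∑ j with g j = k, w j ≤ α * w (rep k))
    {i : Fin p} (hV : ∀ b, 0 ≤ V (rep i) b) :
    WMMS (fun k => V (rep k)) (fun k => w (rep k)) i ≤ α * WMMS V w (rep i) := by
  let x := WMMS V w (rep i) / w (rep i)
  have hx : x * w (rep i) = WMMS V w (rep i) := div_mul_cancel₀ _ (hw (rep i)).ne'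
  have hx_nonneg : 0 ≤ x := div_nonneg (WMMS_nonneg (fun j => (hw j).le) hV) (hw (rep i)).le
  obtain ⟨A, hA, hcost⟩ := (WMMS_le_mul_iff hw).1 hx.ge
  rw [← hx, ← mul_assoc]
  refine (WMMS_le_mul_iff fun k => hw (rep k)).2 ⟨_, hA.mergeBundles g, fun k => ?_⟩
  calc costOf V (rep i) (mergeBundles g A k)
      = ∑ j with g j = k, costOf V (rep i) (A j) := costOf_mergeBundles hA V (rep i) g k
    _ ≤ ∑ j with g j = k, x * w j := sum_le_sum fun j _ => hcost j
    _ = x * ∑ j with g j = k, w j := (mul_sum _ _ _).symm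
    _ ≤ x * (α * w (rep k)) := mul_le_mul_of_nonneg_left (hgroup k) hx_nonneg
    _ = α * x * w (rep k) := by ring

theorem group_reduction_WMMS_general (hw : ∀ j, 0 < w j) (hrep : Function.Injective rep)
    (hgroup : ∀ k, ∑ j with g j = k, w j ≤ α * w (rep k)) {γ : ℝ} (hγ : 0 ≤ γ)
    (hV : ∀ i b, 0 ≤ V i b) {S : Fin p → Finset (Fin m)}
    (hS : IsWMMSAssignment (fun k => V (rep k)) (fun k => w (rep k)) γ S) :
    IsWMMSAssignment V w (α * γ) (mergeBundles rep S) := by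
  refine ⟨hS.1.mergeBundles rep, fun i => ?_⟩
  by_cases hi : i ∈ Set.range rep
  · obtain ⟨k, rfl⟩ := hi
    calc costOf V (rep k) (mergeBundles rep S (rep k))
        = costOf V (rep k) (S k) := by rw [mergeBundles_apply_of_injective hrep]
      _ ≤ γ * WMMS (fun k => V (rep k)) (fun k => w (rep k)) k := hS.2 k
      _ ≤ γ * (α * WMMS V w (rep k)) :=
          mul_le_mul_of_nonneg_left (WMMS_rep_le_mul hw hgroup (hV (rep k))) hγ
      _ = α * γ * WMMS V w (rep k) := by ring
  · have hα : 0 ≤ α := nonneg_of_mul_nonneg_left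
      ((sum_nonneg fun j _ => (hw j).le).trans (hgroup (g i))) (hw (rep (g i)))
    calc costOf V i (mergeBundles rep S i)
        = 0 := by rw [mergeBundles_eq_empty hi, costOf, sum_empty]
      _ ≤ α * γ * WMMS V w i :=
          mul_nonneg (mul_nonneg hα hγ) (WMMS_nonneg (fun j => (hw j).le) (hV i))

end GroupReduction

/-- Lemma red1: grouping agents with distinct representatives, if
group sums are at most `α·w_{i*}` and the reduced instance (entitlements
`β·w_{i*}`) always admits a `γ`-WMMS assignment, then the original entitlements
always admit an `(α·γ)`-WMMS assignment. Groups are the fibers of `g`. -/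
theorem group_reduction_WMMS (n n' : ℕ) (w : Fin n → ℝ)
    (hw : ∀ i, 0 < w i) (hw1 : ∀ i, w i ≤ 1) (hsum : ∑ i, w i = 1)
    (g : Fin n → Fin n') (rep : Fin n' → Fin n)
    (hrep : Function.Injective rep)
    (α : ℝ) (hα : 1 < α)
    (hgroup : ∀ i : Fin n',
      ∑ j ∈ Finset.univ.filter (fun j => g j = i), w j ≤ α * w (rep i))
    (β : ℝ) (hβ : β = 1 / ∑ i : Fin n', w (rep i))
    (γ : ℝ) (hγ : 1 ≤ γ)
    (hreduced : ∀ (m : ℕ) (V : Fin n' → Fin m → ℝ), (∀ i b, 0 ≤ V i b) →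
      ∃ S : Fin n' → Finset (Fin m), IsPartition S ∧
        ∀ i, costOf V i (S i) ≤ γ * WMMS V (fun i => β * w (rep i)) i) :
    ∀ (m : ℕ) (V : Fin n → Fin m → ℝ), (∀ i b, 0 ≤ V i b) →
      ∃ S : Fin n → Finset (Fin m), IsPartition S ∧
        ∀ i, costOf V i (S i) ≤ α * γ * WMMS V w i := by
  intro m V hV
  simp only [hβ, WMMS_normalize fun k => hw (rep k)] at hreduced
  obtain ⟨S, hS⟩ := hreduced m (fun k => V (rep k)) fun k => hV (rep k)
  exact ⟨_, group_reduction_WMMS_general hw hrep hgroup (zero_le_one.trans hγ) hV hS⟩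
end
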